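/- arXiv:1911.09133 — 5 statements merged into one kernel-verified Lean document; each statement's English description precedes it below -/
import Mathlib

section
/- Every block-reduced asymmetric choice (BRAC) Petri net has weighted comparable presets (WPI), i.e., for all transitions t,t' with •t∩•t'≠∅, either W(·,t)≤W(·,t') or W(·,t')≤W(·,t) componentwise on P. -/
section Defs

variable {S L P T : Type*}

/-- `enab tr s a` means the label `a` is enabled at state `s`, i.e. `s[a⟩`. -/
def enab (tr : S → L → S → Prop) (s : S) (a : L) : Prop := ∃ s', tr s a s'

/-- The LTS is deterministic. -/
def Deterministic (tr : S → L → S → Prop) : Prop :=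
  ∀ s a s' s'', tr s a s' → tr s a s'' → s' = s''

/-- `Walk tr s σ s'` : a walk from `s` to `s'` labelled by the word `σ`. -/
inductive Walk (tr : S → L → S → Prop) : S → List L → S → Prop
  | nil (s : S) : Walk tr s [] s
  | cons {s s' s'' : S} {a : L} {σ : List L} :
      tr s a s' → Walk tr s' σ s'' → Walk tr s (a :: σ) s''

/-- `s` is reachable from `s₀`. -/
def ReachableState (tr : S → L → S → Prop) (s₀ s : S) : Prop := ∃ σ, Walk tr s₀ σ s

/-- Every state is reachable from the initial state `s₀`. -/
def ReachableLTS (tr : S → L → S → Prop) (s₀ : S) : Prop := ∀ s, ReachableState tr s₀ s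

/-- `a ≡ b` : `a` and `b` are enabled at exactly the same states. -/
def lequiv (tr : S → L → S → Prop) (a b : L) : Prop := ∀ s, enab tr s a ↔ enab tr s b

/-- `a ▷ b` : wherever `a` is enabled so is `b`, and somewhere `b` is enabled but not `a`. -/
def limpl (tr : S → L → S → Prop) (a b : L) : Prop :=
  (∀ s, enab tr s a → enab tr s b) ∧ ∃ s, enab tr s b ∧ ¬ enab tr s a

/-- `a ⋈ b` : `a ▷ b` or `b ▷ a`. -/
def lbowtie (tr : S → L → S → Prop) (a b : L) : Prop := limpl tr a b ∨ limpl tr b a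

/-- `a ∥ b` : somewhere `a` but not `b` is enabled, and somewhere `b` but not `a`. -/
def linter (tr : S → L → S → Prop) (a b : L) : Prop :=
  (∃ s, enab tr s a ∧ ¬ enab tr s b) ∧ (∃ s, enab tr s b ∧ ¬ enab tr s a)

/-- Deactivation relation `a ⊲⊳ b`: one of the labels can deactivate the other. -/
def ldeact (tr : S → L → S → Prop) (a b : L) : Prop :=
  ∃ s s', (enab tr s a ∧ tr s b s' ∧ ¬ enab tr s' a) ∨
          (enab tr s b ∧ tr s a s' ∧ ¬ enab tr s' b)

/-- A Petri net over places `P` and transitions `T`: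
`Wpt p t = W(p,t)`, `Wtp t p = W(t,p)`, `M0` the initial marking. -/
structure PetriNet (P T : Type*) where
  Wpt : P → T → ℕ
  Wtp : T → P → ℕ
  M0 : P → ℕ

/-- A marking `M` enables a transition `t`. -/
def PetriNet.enables (N : PetriNet P T) (M : P → ℕ) (t : T) : Prop :=
  ∀ p, N.Wpt p t ≤ M p

/-- The marking resulting from firing `t` at `M`. -/
def PetriNet.fire (N : PetriNet P T) (M : P → ℕ) (t : T) : P → ℕ :=
  fun p => M p - N.Wpt p t + N.Wtp t p

/-- One firing step between markings. -/
def PetriNet.step (N : PetriNet P T) (M M' : P → ℕ) : Prop :=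
  ∃ t, N.enables M t ∧ M' = N.fire M t

/-- The marking `M` is reachable from the initial marking. -/
def PetriNet.reach (N : PetriNet P T) (M : P → ℕ) : Prop :=
  Relation.ReflTransGen N.step N.M0 M

/-- `N` solves the LTS given by `tr` and initial state `s₀`: there is a bijection `ζ`
from the states onto the reachable markings with `ζ s₀ = M₀` preserving edges both ways. -/
def Solves (N : PetriNet P T) (tr : S → T → S → Prop) (s₀ : S) : Prop :=
  ∃ ζ : S → (P → ℕ),
    Function.Injective ζ ∧
    (∀ M, N.reach M ↔ ∃ s, ζ s = M) ∧
    ζ s₀ = N.M0 ∧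
    ∀ s s' t, tr s t s' ↔ (N.enables (ζ s) t ∧ N.fire (ζ s) t = ζ s')

/-- The preset `•t` of a transition. -/
def PetriNet.preset (N : PetriNet P T) (t : T) : Set P := {p | 0 < N.Wpt p t}

/-- The postset `p^•` of a place. -/
def PetriNet.postset (N : PetriNet P T) (p : P) : Set T := {t | 0 < N.Wpt p t}

/-- `•T'` for a set of transitions `T'`. -/
def PetriNet.presetSet (N : PetriNet P T) (T' : Set T) : Set P :=
  {p | ∃ t ∈ T', 0 < N.Wpt p t}

/-- All arc weights are at most 1. -/
def PetriNet.plain (N : PetriNet P T) : Prop :=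
  ∀ p t, N.Wpt p t ≤ 1 ∧ N.Wtp t p ≤ 1

/-- Weighted comparable presets: transitions with intersecting presets have comparable presets. -/
def PetriNet.WPI (N : PetriNet P T) : Prop :=
  ∀ t t', (N.preset t ∩ N.preset t').Nonempty →
    (∀ p, N.Wpt p t ≤ N.Wpt p t') ∨ (∀ p, N.Wpt p t' ≤ N.Wpt p t)

/-- Weighted asymmetric choice. -/
def PetriNet.WAC (N : PetriNet P T) : Prop :=
  ∀ p p', (N.postset p ∩ N.postset p').Nonempty →
    (∀ t, N.Wpt p t ≤ N.Wpt p' t) ∨ (∀ t, N.Wpt p' t ≤ N.Wpt p t)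

/-- Equal conflict. -/
def PetriNet.EC (N : PetriNet P T) : Prop :=
  ∀ t t', (N.preset t ∩ N.preset t').Nonempty → ∀ p, N.Wpt p t = N.Wpt p t'

/-- Asymmetric choice: weighted asymmetric choice and plain. -/
def PetriNet.AC (N : PetriNet P T) : Prop := N.plain ∧ N.WAC

/-- Block-reduced asymmetric choice. -/
def PetriNet.BRAC (N : PetriNet P T) : Prop :=
  N.plain ∧ ∀ p p', (N.postset p ∩ N.postset p').Nonempty →
    N.postset p = N.postset p' ∨
    ∃ T1 T2 : Set T,
      (N.postset p = T1 ∧ N.postset p' = T1 ∪ T2 ∧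
        N.presetSet T1 = {p, p'} ∧ N.presetSet T2 = {p'}) ∨
      (N.postset p' = T1 ∧ N.postset p = T1 ∪ T2 ∧
        N.presetSet T1 = {p, p'} ∧ N.presetSet T2 = {p})

/-- Reduced asymmetric choice. -/
def PetriNet.RAC (N : PetriNet P T) : Prop :=
  N.plain ∧ ∀ p p', p ≠ p' → (N.postset p ∩ N.postset p').Nonempty →
    ((N.postset p).ncard = 1 ∧ (N.postset p').ncard ≤ 2 ∧
      N.presetSet (N.postset p') = {p, p'}) ∨
    ((N.postset p').ncard = 1 ∧ (N.postset p).ncard ≤ 2 ∧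
      N.presetSet (N.postset p) = {p, p'})

/-- A region `(R,B,F)` of the LTS given by `tr`. -/
def IsRegion (tr : S → L → S → Prop) (R : S → ℕ) (B F : L → ℕ) : Prop :=
  ∀ s a s', tr s a s' → B a ≤ R s ∧ R s' = R s - B a + F a

end Defs

/-!
If a transition `t` consumes from `p` but not from `q`, while some other transition consumes from
both, then block reduction puts `t` in the block `T₂` of `p^•`, so `p` is its only input place.
Hence, of two transitions sharing an input place, whichever lacks an input of the other has only
the shared one.
-/

namespace PetriNet

variable {P T : Type*} {N : PetriNet P T} {p q : P} {t t' : T}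

theorem preset_subset_presetSet {T' : Set T} (ht : t ∈ T') : N.preset t ⊆ N.presetSet T' :=
  fun _ hp => ⟨t, ht, hp⟩

theorem Wpt_le_iff_preset_subset (ht : ∀ p, N.Wpt p t ≤ 1) :
    (∀ p, N.Wpt p t ≤ N.Wpt p t') ↔ N.preset t ⊆ N.preset t' := by
  refine ⟨fun hle p hp => hp.trans_le (hle p), fun hsub p => ?_⟩
  rcases Nat.eq_zero_or_pos (N.Wpt p t) with hzero | hpos
  · exact hzero ▸ Nat.zero_le _
  · exact (ht p).trans (hsub hpos)

namespace BRAC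

theorem preset_eq_singleton (hN : N.BRAC) (hpq : (N.postset p ∩ N.postset q).Nonempty)
    (htp : t ∈ N.postset p) (htq : t ∉ N.postset q) : N.preset t = {p} := by
  rcases hN.2 p q hpq with heq | ⟨T₁, T₂, ⟨hp, hq, -, -⟩ | ⟨hq, hp, -, hT₂⟩⟩
  · exact absurd (heq ▸ htp) htq
  · have hsub : N.postset p ⊆ N.postset q := by
      rw [hp, hq]
      exact Set.subset_union_left
    exact absurd (hsub htp) htq
  · have ht : t ∈ T₂ := (hp ▸ htp : t ∈ T₁ ∪ T₂).resolve_left (hq ▸ htq)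
    have hsub : N.preset t ⊆ {p} := hT₂ ▸ preset_subset_presetSet ht
    exact hsub.antisymm (Set.singleton_subset_iff.2 htp)

theorem preset_subset_or_subset (hN : N.BRAC) (htt' : (N.preset t ∩ N.preset t').Nonempty) :
    N.preset t ⊆ N.preset t' ∨ N.preset t' ⊆ N.preset t := by
  obtain ⟨p, hpt, hpt'⟩ := htt'
  refine or_iff_not_imp_left.2 fun hnot => ?_
  obtain ⟨q, hqt, hqt'⟩ := Set.not_subset.1 hnot
  have hsingle : N.preset t' = {p} :=
    hN.preset_eq_singleton (q := q) ⟨t, hpt, hqt⟩ hpt' hqt'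
  rw [hsingle]
  exact Set.singleton_subset_iff.2 hpt

end BRAC

end PetriNet

theorem brac_is_wpi_general {P T : Type*} (N : PetriNet P T) (h : N.BRAC) : N.WPI := by
  intro t t' htt'
  have hplain (t : T) (p : P) : N.Wpt p t ≤ 1 := (h.1 p t).1
  rw [PetriNet.Wpt_le_iff_preset_subset (hplain t),
    PetriNet.Wpt_le_iff_preset_subset (hplain t')]
  exact h.preset_subset_or_subset htt'

/-- Every block-reduced asymmetric choice (BRAC) Petri net has
weighted comparable presets (WPI). -/
theorem brac_is_wpi {P T : Type*} [Fintype P] [Fintype T]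
    (N : PetriNet P T) (h : N.BRAC) :
    ∀ t t', (N.preset t ∩ N.preset t').Nonempty →
      (∀ p, N.Wpt p t ≤ N.Wpt p t') ∨ (∀ p, N.Wpt p t' ≤ N.Wpt p t) :=
  brac_is_wpi_general N h
end

section
/- Every equal-conflict (EC) Petri net is weighted asymmetric choice (WAC), i.e., for all places p,p' with p^•∩p'^•≠∅, either W(p,·)≤W(p',·) or W(p',·)≤W(p,·) componentwise on T. -/
namespace PetriNet

variable {P T : Type*} {N : PetriNet P T}

theorem EC.Wpt_eq_of_mem_postset (h : N.EC) {p : P} {t u : T} (ht : t ∈ N.postset p)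
    (hu : u ∈ N.postset p) (q : P) : N.Wpt q t = N.Wpt q u :=
  h t u ⟨p, ht, hu⟩ q

-- `W(p,·)` and `W(q,·)` are both constant on `p^•`, and `W(p,·)` vanishes off it, so comparing
-- them at a single transition of `p^•` suffices.
theorem EC.Wpt_le_of_mem_postset (h : N.EC) {p q : P} {t : T} (ht : t ∈ N.postset p)
    (hle : N.Wpt p t ≤ N.Wpt q t) : N.Wpt p ≤ N.Wpt q := by
  intro u
  by_cases hu : u ∈ N.postset p
  · calc N.Wpt p u = N.Wpt p t := h.Wpt_eq_of_mem_postset hu ht p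
      _ ≤ N.Wpt q t := hle
      _ = N.Wpt q u := h.Wpt_eq_of_mem_postset ht hu q
  · have hpu : N.Wpt p u = 0 := Nat.eq_zero_of_not_pos hu
    exact hpu.trans_le (Nat.zero_le _)

end PetriNet

theorem ec_is_wac_general {P T : Type*} (N : PetriNet P T) (h : N.EC) : N.WAC := by
  rintro p p' ⟨t, ht, ht'⟩
  exact (le_total (N.Wpt p t) (N.Wpt p' t)).imp
    (h.Wpt_le_of_mem_postset ht) (h.Wpt_le_of_mem_postset ht')

/-- Every equal-conflict (EC) Petri net is weighted asymmetric
choice (WAC). -/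
theorem ec_is_wac {P T : Type*} [Fintype P] [Fintype T]
    (N : PetriNet P T) (h : N.EC) :
    ∀ p p', (N.postset p ∩ N.postset p').Nonempty →
      (∀ t, N.Wpt p t ≤ N.Wpt p' t) ∨ (∀ t, N.Wpt p' t ≤ N.Wpt p t) :=
  ec_is_wac_general N h
end

section
/- Let N=(P,T,W,M₀) be a Petri net solving an LTS TS=(S,T,→,s₀), and let a,b∈T be labels with a⊲⊳b (one of them can deactivate the other). Then there exists a place p∈P with W(p,a)>0 and W(p,b)>0, i.e., the presets of a and b are not disjoint. -/
/-! Firing `b` removes tokens only from the preset of `b`, so it cannot disable `a` unless the two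
presets meet. This transfers to the transition system because the reachable markings are closed
under firing: a label is enabled at a state exactly when the net enables it at the corresponding
marking. -/

namespace PetriNet

variable {P T : Type*} {N : PetriNet P T} {M : P → ℕ} {a b t : T}

theorem reach.fire (hM : N.reach M) (ht : N.enables M t) : N.reach (N.fire M t) :=
  hM.tail ⟨t, ht, rfl⟩

theorem le_fire_of_notMem_preset {p : P} (hp : p ∉ N.preset t) : M p ≤ N.fire M t p := by
  have hW : N.Wpt p t = 0 := Nat.eq_zero_of_not_pos hp
  simp [PetriNet.fire, hW]

theorem enables.fire_of_disjoint_preset (ha : N.enables M a)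
    (hab : Disjoint (N.preset a) (N.preset b)) : N.enables (N.fire M b) a := by
  intro p
  by_cases hp : p ∈ N.preset a
  · exact (ha p).trans (le_fire_of_notMem_preset (hab.notMem_of_mem_left hp))
  · exact (Nat.eq_zero_of_not_pos hp).trans_le (Nat.zero_le _)

theorem not_disjoint_preset_of_not_enables_fire (ha : N.enables M a)
    (hfire : ¬ N.enables (N.fire M b) a) : ¬ Disjoint (N.preset a) (N.preset b) :=
  fun hab => hfire (ha.fire_of_disjoint_preset hab)

end PetriNet

section Solves

variable {S P T : Type*} {tr : S → T → S → Prop} {s₀ : S} {N : PetriNet P T}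

theorem Solves.exists_enab_iff_enables (hsol : Solves N tr s₀) :
    ∃ ζ : S → P → ℕ, (∀ s t, enab tr s t ↔ N.enables (ζ s) t) ∧
      ∀ s s' t, tr s t s' → ζ s' = N.fire (ζ s) t := by
  obtain ⟨ζ, -, hreach, -, hedge⟩ := hsol
  refine ⟨ζ, fun s t => ⟨fun ⟨s', hs'⟩ => ((hedge s s' t).1 hs').1, fun ht => ?_⟩,
    fun s s' t hs' => ((hedge s s' t).1 hs').2.symm⟩
  have hs : N.reach (ζ s) := (hreach (ζ s)).2 ⟨s, rfl⟩
  obtain ⟨s', hs'⟩ := (hreach _).1 (hs.fire ht)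
  exact ⟨s', (hedge s s' t).2 ⟨ht, hs'.symm⟩⟩

theorem deactivation_common_preset_place_general (ζ : S → P → ℕ)
    (henab : ∀ s t, enab tr s t ↔ N.enables (ζ s) t)
    (hfire : ∀ s s' t, tr s t s' → ζ s' = N.fire (ζ s) t) {a b : T} (hd : ldeact tr a b) :
    ∃ p : P, 0 < N.Wpt p a ∧ 0 < N.Wpt p b := by
  have not_disjoint {s s' : S} {t u : T} (ht : enab tr s t) (hu : tr s u s')
      (ht' : ¬ enab tr s' t) : ¬ Disjoint (N.preset t) (N.preset u) := by
    rw [henab] at ht ht'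
    rw [hfire s s' u hu] at ht'
    exact PetriNet.not_disjoint_preset_of_not_enables_fire ht ht'
  refine Set.not_disjoint_iff.1 ?_
  obtain ⟨s, s', ⟨ha, hb, ha'⟩ | ⟨hb, ha, hb'⟩⟩ := hd
  · exact not_disjoint ha hb ha'
  · exact fun hab => not_disjoint hb ha hb' hab.symm

end Solves

/-- If `N` solves the LTS and `a ⊲⊳ b` (one label can deactivate the
other), then the presets of `a` and `b` are not disjoint. -/
theorem deactivation_common_preset_place
    {S P T : Type*} [Fintype S] [Fintype P] [Fintype T]
    (tr : S → T → S → Prop) (s₀ : S) (N : PetriNet P T)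
    (hsol : Solves N tr s₀) (a b : T) (hd : ldeact tr a b) :
    ∃ p : P, 0 < N.Wpt p a ∧ 0 < N.Wpt p b := by
  obtain ⟨ζ, henab, hfire⟩ := hsol.exists_enab_iff_enables
  exact deactivation_common_preset_place_general ζ henab hfire hd
end

section
/- Let TS=(S,Σ,→,s₀) be a finite, reachable, deterministic LTS that is solved by some Petri net, and let a,b∈Σ be labels with a≡b and not a⊲⊳b. Then every edge of TS labelled a is a self-loop and every edge labelled b is a self-loop, i.e., s[a⟩s' implies s'=s and s[b⟩s' implies s'=s. -/
/-!
Each place of a net solving an LTS is a region `R`, and an `a`-edge changes `R` by the constant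
`F a - B a`. If `a` never deactivates itself, an `a`-edge can be prolonged forever, so this constant
is nonnegative because `R` takes values in `ℕ`, and nonpositive if `R` is bounded. Hence `R` takes
the same value at both ends of an `a`-edge, and since the places separate states, the edge is a
self-loop. For `a ≡ b`, the relation `a ⊲⊳ b` says that `a` or `b` deactivates itself.
-/

section Deactivation

variable {S L : Type*} {tr : S → L → S → Prop} {a b : L}

theorem ldeact_self_iff : ldeact tr a a ↔ ∃ s s', tr s a s' ∧ ¬ enab tr s' a := by
  simp only [ldeact, or_self]
  exact exists₂_congr fun s s' => and_iff_right_of_imp fun h => ⟨s', h.1⟩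

theorem enab_of_not_ldeact_self (ha : ¬ ldeact tr a a) {s s' : S} (h : tr s a s') :
    enab tr s' a := by
  by_contra hs'
  exact ha (ldeact_self_iff.2 ⟨s, s', h, hs'⟩)

theorem lequiv.ldeact_iff (hab : lequiv tr a b) :
    ldeact tr a b ↔ ldeact tr a a ∨ ldeact tr b b := by
  simp only [ldeact_self_iff]
  constructor
  · rintro ⟨s, s', ⟨-, h, hs'⟩ | ⟨-, h, hs'⟩⟩
    · exact .inr ⟨s, s', h, mt (hab s').2 hs'⟩
    · exact .inl ⟨s, s', h, mt (hab s').1 hs'⟩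
  · rintro (⟨s, s', h, hs'⟩ | ⟨s, s', h, hs'⟩)
    · exact ⟨s, s', .inr ⟨(hab s).1 ⟨s', h⟩, h, mt (hab s').2 hs'⟩⟩
    · exact ⟨s, s', .inl ⟨(hab s).2 ⟨s', h⟩, h, mt (hab s').1 hs'⟩⟩

theorem exists_edge_not_lt_of_not_ldeact_self {α : Type*} [LT α] [WellFoundedLT α] (f : S → α)
    (ha : ¬ ldeact tr a a) {s : S} (hs : enab tr s a) : ∃ x y, tr x a y ∧ ¬ f y < f x := by
  obtain ⟨x, ⟨y, hxy⟩, hmin⟩ :=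
    (InvImage.wf f wellFounded_lt).has_min {x | enab tr x a} ⟨s, hs⟩
  exact ⟨x, y, hxy, hmin y (enab_of_not_ldeact_self ha hxy)⟩

end Deactivation

section Regions

variable {S L : Type*} {tr : S → L → S → Prop} {R : S → ℕ} {B F : L → ℕ} {a : L} {s s' : S}

theorem IsRegion.le_of_not_ldeact_self (hR : IsRegion tr R B F) (ha : ¬ ldeact tr a a)
    (hs : enab tr s a) : B a ≤ F a := by
  obtain ⟨x, y, hxy, hnlt⟩ := exists_edge_not_lt_of_not_ldeact_self R ha hs
  obtain ⟨hB, hy⟩ := hR x a y hxy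
  omega

theorem IsRegion.ge_of_not_ldeact_self (hR : IsRegion tr R B F)
    (hbdd : BddAbove (Set.range R)) (ha : ¬ ldeact tr a a) (hs : enab tr s a) : F a ≤ B a := by
  obtain ⟨K, hK⟩ := hbdd
  obtain ⟨x, y, hxy, hnlt⟩ := exists_edge_not_lt_of_not_ldeact_self (fun s => K - R s) ha hs
  obtain ⟨hB, hy⟩ := hR x a y hxy
  have hyK : R y ≤ K := hK ⟨y, rfl⟩
  omega

theorem IsRegion.apply_eq_of_not_ldeact_self (hR : IsRegion tr R B F)
    (hbdd : BddAbove (Set.range R)) (ha : ¬ ldeact tr a a) (h : tr s a s') : R s' = R s := by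
  have heq : B a = F a := le_antisymm (hR.le_of_not_ldeact_self ha ⟨s', h⟩)
    (hR.ge_of_not_ldeact_self hbdd ha ⟨s', h⟩)
  obtain ⟨hle, hs'⟩ := hR s a s' h
  rw [hs', ← heq, Nat.sub_add_cancel hle]

/-- The state separation property of region theory, with bounded regions: any two distinct states
are told apart by a bounded region. Boundedness stands in for finiteness of the state space, where
it is automatic. -/
def BddStateSeparated (tr : S → L → S → Prop) : Prop :=
  Pairwise fun s s' => ∃ R B F, IsRegion tr R B F ∧ BddAbove (Set.range R) ∧ R s ≠ R s'

theorem BddStateSeparated.eq_of_not_ldeact_self (hsep : BddStateSeparated tr)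
    (ha : ¬ ldeact tr a a) (h : tr s a s') : s' = s := by
  by_contra hne
  obtain ⟨R, B, F, hR, hbdd, hRne⟩ := hsep hne
  exact hRne (hR.apply_eq_of_not_ldeact_self hbdd ha h)

end Regions

section Nets

variable {S P T : Type*} {tr : S → T → S → Prop} {N : PetriNet P T}

theorem PetriNet.isRegion_apply {ζ : S → P → ℕ}
    (hζ : ∀ s t s', tr s t s' → N.enables (ζ s) t ∧ N.fire (ζ s) t = ζ s') (p : P) :
    IsRegion tr (fun s => ζ s p) (N.Wpt p) (fun t => N.Wtp t p) := fun s t s' h =>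
  ⟨(hζ s t s' h).1 p, (congrFun (hζ s t s' h).2 p).symm⟩

theorem Solves.bddStateSeparated [Finite S] {s₀ : S} (hN : Solves N tr s₀) :
    BddStateSeparated tr := by
  intro s s' hne
  obtain ⟨ζ, hinj, -, -, hedge⟩ := hN
  obtain ⟨p, hp⟩ := Function.ne_iff.1 (hinj.ne hne)
  exact ⟨_, _, _, N.isRegion_apply (fun s t s' => (hedge s s' t).1) p,
    (Set.finite_range _).bddAbove, hp⟩

end Nets

theorem equiv_no_deact_selfloops_general {S L : Type*} {tr : S → L → S → Prop}
    (hsep : BddStateSeparated tr) {a b : L} (hab : lequiv tr a b) (hnd : ¬ ldeact tr a b) :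
    (∀ s s' : S, tr s a s' → s' = s) ∧ (∀ s s' : S, tr s b s' → s' = s) := by
  obtain ⟨ha, hb⟩ := not_or.1 (mt hab.ldeact_iff.2 hnd)
  exact ⟨fun _ _ => hsep.eq_of_not_ldeact_self ha, fun _ _ => hsep.eq_of_not_ldeact_self hb⟩

/-- Case 4: If some Petri net solves the finite, reachable,
deterministic LTS and `a ≡ b` with `¬ a ⊲⊳ b`, then every `a`-labelled edge and
every `b`-labelled edge is a self-loop. -/
theorem equiv_no_deact_selfloops
    {S L : Type*} [Fintype S] [Fintype L] (tr : S → L → S → Prop) (s₀ : S)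
    (hdet : Deterministic tr) (hreach : ReachableLTS tr s₀)
    (hsolvable : ∃ (P : Type) (_ : Finite P) (N : PetriNet P L), Solves N tr s₀)
    (a b : L) (hab : lequiv tr a b) (hnd : ¬ ldeact tr a b) :
    (∀ s s' : S, tr s a s' → s' = s) ∧ (∀ s s' : S, tr s b s' → s' = s) := by
  obtain ⟨P, _, N, hN⟩ := hsolvable
  exact equiv_no_deact_selfloops_general hN.bddStateSeparated hab hnd
end

section
/- Let TS=(S,Σ,→,s₀) be a finite, reachable, deterministic LTS without self-loops (no edge s[t⟩s), and suppose some Petri net with weighted comparable presets (WPI) solves TS. Then there exists a WPI Petri net N=(P,T,W,M₀) solving TS such that for all labels a,b∈Σ: (i) if a≡b then W(·,a)=W(·,b); (ii) if a∥b, or if a⋈b and not a⊲⊳b, then •a∩•b=∅; (iii) if a▷b and a⊲⊳b then W(·,b)⪇W(·,a), i.e., the preset of b is properly contained (with arc weights) in that of a. -/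
/-!
In a WPI solution, labels with `a ⊲⊳ b` share a place, so their presets are comparable, and the
label with the smaller preset is enabled wherever the other one is. Suppose that no label can be
fired forever. This holds in a finite LTS without self-loops, since every firing of `t` shifts the
marking by the same nonzero vector. If `b` is enabled wherever `a` is, and `a` is enabled somewhere,
then firing `b` repeatedly must at some point disable `a`, whence `a ⊲⊳ b`.

In particular, the presets of equivalent labels that are enabled somewhere form a chain. Replacing
each of them by the supremum of its chain, and returning the additional tokens upon firing, changes
neither enabling nor effect. Labels that are enabled nowhere are moved to a fresh place that is
never marked.
-/

section PresetRelations

open PetriNet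

variable {S L P : Type*} {tr : S → L → S → Prop} {s₀ : S} {a b t : L} {p : P}

lemma ldeact_comm : ldeact tr a b ↔ ldeact tr b a := by
  simp only [ldeact, or_comm]

lemma ldeact_of_enab_imp (hterm : WellFounded fun s' s => tr s b s')
    (hab : ∀ s, enab tr s a → enab tr s b) {s : S} (ha : enab tr s a) : ldeact tr a b := by
  induction s using hterm.induction with
  | _ s ih =>
    obtain ⟨s', hs'⟩ := hab s ha
    by_cases ha' : enab tr s' a
    · exact ih s' hs' ha'
    · exact ⟨s, s', .inl ⟨ha, hs', ha'⟩⟩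

/-- `ζ` witnesses that `N` solves the LTS given by `tr` and `s₀`. The edge condition of `Solves` is
split into enabling and firing, and reachability is expressed in the LTS rather than in `N`. -/
structure PetriNet.SolvesVia (N : PetriNet P L) (tr : S → L → S → Prop) (s₀ : S)
    (ζ : S → P → ℕ) : Prop where
  injective : Function.Injective ζ
  map_initial : ζ s₀ = N.M0
  reachable : ∀ s, Relation.ReflTransGen (fun u v => ∃ t, tr u t v) s₀ s
  enab_iff : ∀ s t, enab tr s t ↔ N.enables (ζ s) t
  fire_eq : ∀ {s t s'}, tr s t s' → N.fire (ζ s) t = ζ s'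

variable {N : PetriNet P L} {ζ : S → P → ℕ}

lemma Solves.exists_solvesVia (hsol : Solves N tr s₀) : ∃ ζ, N.SolvesVia tr s₀ ζ := by
  obtain ⟨ζ, hinj, hreach, hζ₀, hedge⟩ := hsol
  have enab_iff (s t) : enab tr s t ↔ N.enables (ζ s) t := by
    refine ⟨fun ⟨s', hs'⟩ => ((hedge s s' t).1 hs').1, fun ht => ?_⟩
    obtain ⟨s', hs'⟩ := (hreach (N.fire (ζ s) t)).1 (.tail ((hreach _).2 ⟨s, rfl⟩) ⟨t, ht, rfl⟩)
    exact ⟨s', (hedge s s' t).2 ⟨ht, hs'.symm⟩⟩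
  have reachable_of_reach {M} (hM : N.reach M) :
      ∃ s, ζ s = M ∧ Relation.ReflTransGen (fun u v => ∃ t, tr u t v) s₀ s := by
    induction hM with
    | refl => exact ⟨s₀, hζ₀, .refl⟩
    | tail _ hstep ih =>
      obtain ⟨s, rfl, hs⟩ := ih
      obtain ⟨t, ht, rfl⟩ := hstep
      obtain ⟨s', hs'⟩ := (enab_iff s t).2 ht
      exact ⟨s', ((hedge s s' t).1 hs').2.symm, hs.tail ⟨t, hs'⟩⟩
  refine ⟨ζ, hinj, hζ₀, fun s => ?_, enab_iff, fun ht => ((hedge _ _ _).1 ht).2⟩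
  obtain ⟨s', hζ, hs'⟩ := reachable_of_reach ((hreach (ζ s)).2 ⟨s, rfl⟩)
  exact hinj hζ ▸ hs'

namespace PetriNet

namespace SolvesVia

lemma step (h : N.SolvesVia tr s₀ ζ) {s s' : S} (ht : tr s t s') : N.step (ζ s) (ζ s') :=
  ⟨t, (h.enab_iff s t).1 ⟨s', ht⟩, (h.fire_eq ht).symm⟩

lemma solves (h : N.SolvesVia tr s₀ ζ) : Solves N tr s₀ := by
  refine ⟨ζ, h.injective, fun M => ⟨fun hM => ?_, ?_⟩, h.map_initial,
    fun s s' t => ⟨fun ht => ?_, ?_⟩⟩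
  · induction hM with
    | refl => exact ⟨s₀, h.map_initial⟩
    | tail _ hstep ih =>
      obtain ⟨s, rfl⟩ := ih
      obtain ⟨t, ht, rfl⟩ := hstep
      obtain ⟨s', hs'⟩ := (h.enab_iff s t).2 ht
      exact ⟨s', (h.fire_eq hs').symm⟩
  · rintro ⟨s, rfl⟩
    have hs : Relation.ReflTransGen N.step (ζ s₀) (ζ s) :=
      (h.reachable s).lift ζ fun _ _ ⟨_, ht⟩ => h.step ht
    rwa [h.map_initial] at hs
  · exact ⟨(h.enab_iff s t).1 ⟨s', ht⟩, h.fire_eq ht⟩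
  · rintro ⟨ht, hfire⟩
    obtain ⟨s'', hs''⟩ := (h.enab_iff s t).2 ht
    rwa [h.injective ((h.fire_eq hs'').symm.trans hfire)] at hs''

lemma enab_of_weight_le (h : N.SolvesVia tr s₀ ζ) (hab : ∀ p, N.Wpt p a ≤ N.Wpt p b) {s : S}
    (hb : enab tr s b) : enab tr s a :=
  (h.enab_iff s a).2 fun p => (hab p).trans ((h.enab_iff s b).1 hb p)

lemma marking_sub_marking (h : N.SolvesVia tr s₀ ζ) {s s' : S} (ht : tr s t s') (p : P) :
    (ζ s' p - ζ s p : ℤ) = N.Wtp t p - N.Wpt p t := by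
  have hle : N.Wpt p t ≤ ζ s p := (h.enab_iff s t).1 ⟨s', ht⟩ p
  rw [← h.fire_eq ht, fire]
  omega

lemma wellFounded_of_no_selfloop [Finite S] (h : N.SolvesVia tr s₀ ζ)
    (hnoself : ∀ s, ¬ tr s t s) : WellFounded fun s' s => tr s t s' := by
  set δ : P → ℤ := fun p => N.Wtp t p - N.Wpt p t
  by_cases hδ : ∃ p, δ p ≠ 0
  · obtain ⟨p, hp⟩ := hδ
    -- Firing `t` increases this potential by `δ p ^ 2`.
    let potential : S → ℤ := fun s => δ p * ζ s p
    have hwf : WellFounded fun s' s => potential s < potential s' :=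
      have : IsTrans S fun s' s => potential s < potential s' := ⟨fun _ _ _ h₁ h₂ => h₂.trans h₁⟩
      have : Std.Irrefl fun s' s => potential s < potential s' := ⟨fun _ => lt_irrefl _⟩
      Finite.wellFounded_of_trans_of_irrefl _
    refine Subrelation.wf (fun {s' s} ht => ?_) hwf
    have hincr : potential s' - potential s = δ p * δ p := by
      rw [← mul_sub, h.marking_sub_marking ht p]
    have := mul_self_pos.2 hp
    omega
  · push Not at hδ
    refine Subrelation.wf (fun {s' s} ht => hnoself s ?_) emptyWf.wf
    have hζ : ζ s' = ζ s := funext fun p => by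
      have : (ζ s' p - ζ s p : ℤ) = 0 := (h.marking_sub_marking ht p).trans (hδ p)
      omega
    rwa [h.injective hζ] at ht

lemma preset_inter_nonempty_of_disabled (h : N.SolvesVia tr s₀ ζ) {s s' : S} (ha : enab tr s a)
    (hb : tr s b s') (ha' : ¬ enab tr s' a) : (N.preset a ∩ N.preset b).Nonempty := by
  have ⟨p, hp⟩ : ∃ p, ζ s' p < N.Wpt p a := by
    simpa only [h.enab_iff, enables, not_forall, not_le] using ha'
  have hle : N.Wpt p a ≤ ζ s p := (h.enab_iff s a).1 ha p
  have hδ := h.marking_sub_marking hb p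
  exact ⟨p, show 0 < N.Wpt p a by omega, show 0 < N.Wpt p b by omega⟩

lemma preset_inter_nonempty (h : N.SolvesVia tr s₀ ζ) (hd : ldeact tr a b) :
    (N.preset a ∩ N.preset b).Nonempty := by
  obtain ⟨s, s', ⟨ha, hb, ha'⟩ | ⟨hb, ha, hb'⟩⟩ := hd
  · exact h.preset_inter_nonempty_of_disabled ha hb ha'
  · exact Set.inter_comm _ _ ▸ h.preset_inter_nonempty_of_disabled hb ha hb'

lemma preset_inter_eq_empty_of_linter (h : N.SolvesVia tr s₀ ζ) (hN : N.WPI)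
    (hab : linter tr a b) : N.preset a ∩ N.preset b = ∅ := by
  obtain ⟨⟨s, hsa, hsb⟩, u, hub, hua⟩ := hab
  by_contra hne
  rcases hN a b (Set.nonempty_iff_ne_empty.2 hne) with hle | hle
  · exact hua (h.enab_of_weight_le hle hub)
  · exact hsb (h.enab_of_weight_le hle hsa)

lemma weight_lt_of_limpl_of_ldeact (h : N.SolvesVia tr s₀ ζ) (hN : N.WPI)
    (hab : limpl tr a b) (hd : ldeact tr a b) :
    (∀ p, N.Wpt p b ≤ N.Wpt p a) ∧ ∃ p, N.Wpt p b ≠ N.Wpt p a := by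
  obtain ⟨-, s, hsb, hsa⟩ := hab
  have hnot : ¬ ∀ p, N.Wpt p a ≤ N.Wpt p b := fun hle => hsa (h.enab_of_weight_le hle hsb)
  refine ⟨(hN a b (h.preset_inter_nonempty hd)).resolve_left hnot, ?_⟩
  by_contra! heq
  exact hnot fun p => (heq p).ge

end SolvesVia

end PetriNet

/-- The labels equivalent to `t`, provided they are enabled somewhere. If `t` is enabled nowhere,
the set is empty rather than the class of all such labels. -/
def liveClass (tr : S → L → S → Prop) (t : L) : Set L :=
  {u | lequiv tr t u ∧ ∃ s, enab tr s u}

lemma mem_liveClass_self {s : S} (ht : enab tr s t) : t ∈ liveClass tr t :=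
  ⟨fun _ => Iff.rfl, s, ht⟩

lemma exists_enab_of_mem_liveClass {u : L} (hu : u ∈ liveClass tr t) : ∃ s, enab tr s t :=
  hu.2.imp fun s hs => (hu.1 s).2 hs

lemma liveClass_congr (hab : lequiv tr a b) : liveClass tr a = liveClass tr b :=
  Set.ext fun _ => and_congr_left fun _ => forall_congr' fun s => by rw [hab s]

namespace PetriNet

/-- The largest weight of an arc from `p` to a live label equivalent to `t`, and `0` if `t` is
enabled nowhere. In a solution of the LTS the supremum is never over an unbounded set. -/
noncomputable def classWeight (N : PetriNet P L) (tr : S → L → S → Prop) (p : P) (t : L) : ℕ :=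
  ⨆ u : liveClass tr t, N.Wpt p u

lemma classWeight_congr (hab : lequiv tr a b) :
    N.classWeight tr p a = N.classWeight tr p b := by
  rw [classWeight, classWeight, liveClass_congr hab]

lemma exists_lt_weight_of_lt_classWeight {n : ℕ} (hn : n < N.classWeight tr p t) :
    ∃ u ∈ liveClass tr t, n < N.Wpt p u := by
  obtain ⟨u, hu⟩ := exists_lt_of_lt_ciSup' hn
  exact ⟨u, u.2, hu⟩

lemma exists_enab_of_classWeight_pos (hp : 0 < N.classWeight tr p t) : ∃ s, enab tr s t :=
  have ⟨_, hu, _⟩ := exists_lt_weight_of_lt_classWeight hp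
  exists_enab_of_mem_liveClass hu

namespace SolvesVia

lemma weight_le_marking (h : N.SolvesVia tr s₀ ζ) {s : S} (hs : enab tr s t) {u : L}
    (hu : u ∈ liveClass tr t) (p : P) : N.Wpt p u ≤ ζ s p :=
  (h.enab_iff s u).1 ((hu.1 s).1 hs) p

lemma classWeight_le_marking (h : N.SolvesVia tr s₀ ζ) {s : S} (hs : enab tr s t) (p : P) :
    N.classWeight tr p t ≤ ζ s p :=
  ciSup_le' fun u => h.weight_le_marking hs u.2 p

lemma weight_le_classWeight (h : N.SolvesVia tr s₀ ζ) {u : L} (hu : u ∈ liveClass tr t) (p : P) :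
    N.Wpt p u ≤ N.classWeight tr p t := by
  obtain ⟨s, hs⟩ := exists_enab_of_mem_liveClass hu
  have hbdd : BddAbove (Set.range fun v : liveClass tr t => N.Wpt p v) :=
    ⟨ζ s p, Set.forall_mem_range.2 fun v => h.weight_le_marking hs v.2 p⟩
  exact le_ciSup hbdd ⟨u, hu⟩

lemma exists_weight_ge_of_mem_liveClass (h : N.SolvesVia tr s₀ ζ) (hN : N.WPI)
    (hterm : ∀ t, WellFounded fun s' s => tr s t s') {u v : L} (hu : u ∈ liveClass tr t)
    (hv : v ∈ liveClass tr t) :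
    ∃ w ∈ liveClass tr t, (∀ p, N.Wpt p u ≤ N.Wpt p w) ∧ ∀ p, N.Wpt p v ≤ N.Wpt p w := by
  obtain ⟨s, hs⟩ := hu.2
  have hd : ldeact tr u v :=
    ldeact_of_enab_imp (hterm v) (fun s hs => (hv.1 s).1 ((hu.1 s).2 hs)) hs
  rcases hN u v (h.preset_inter_nonempty hd) with huv | hvu
  · exact ⟨v, hv, huv, fun _ => le_rfl⟩
  · exact ⟨u, hu, fun _ => le_rfl, hvu⟩

lemma classWeight_comparable (h : N.SolvesVia tr s₀ ζ) (hN : N.WPI)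
    (hterm : ∀ t, WellFounded fun s' s => tr s t s')
    (ha : 0 < N.classWeight tr p a) (hb : 0 < N.classWeight tr p b) :
    (∀ q, N.classWeight tr q a ≤ N.classWeight tr q b) ∨
      ∀ q, N.classWeight tr q b ≤ N.classWeight tr q a := by
  by_contra! ⟨⟨q, hq⟩, r, hr⟩
  obtain ⟨u₀, hu₀, hpu₀⟩ := exists_lt_weight_of_lt_classWeight ha
  obtain ⟨v₀, hv₀, hpv₀⟩ := exists_lt_weight_of_lt_classWeight hb
  obtain ⟨u₁, hu₁, hqu₁⟩ := exists_lt_weight_of_lt_classWeight hq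
  obtain ⟨v₁, hv₁, hrv₁⟩ := exists_lt_weight_of_lt_classWeight hr
  -- Dominating representatives both use `p` and are thus comparable.
  obtain ⟨u, hu, hu₀u, hu₁u⟩ := h.exists_weight_ge_of_mem_liveClass hN hterm hu₀ hu₁
  obtain ⟨v, hv, hv₀v, hv₁v⟩ := h.exists_weight_ge_of_mem_liveClass hN hterm hv₀ hv₁
  rcases hN u v ⟨p, hpu₀.trans_le (hu₀u p), hpv₀.trans_le (hv₀v p)⟩ with huv | hvu
  · exact (((hqu₁.trans_le (hu₁u q)).trans_le (huv q)).trans_le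
      (h.weight_le_classWeight hv q)).false
  · exact (((hrv₁.trans_le (hv₁v r)).trans_le (hvu r)).trans_le
      (h.weight_le_classWeight hu r)).false

end SolvesVia

open Classical in
/-- The net in which each label has the preset given by `classWeight`, the additional tokens being
returned upon firing, and in which the labels that are enabled nowhere in the LTS have the fresh,
unmarked place `none` as their only preset place. -/
noncomputable def saturate (N : PetriNet P L) (tr : S → L → S → Prop) :
    PetriNet (Option P) L where
  Wpt
    | none, t => if ∃ s, enab tr s t then 0 else 1
    | some p, t => N.classWeight tr p t
  Wtp
    | _, none => 0
    | t, some p => N.Wtp t p + (N.classWeight tr p t - N.Wpt p t)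
  M0 q := q.elim 0 N.M0

lemma saturate_Wpt_none_eq_zero : (N.saturate tr).Wpt none t = 0 ↔ ∃ s, enab tr s t := by
  simp [saturate]

lemma saturate_Wpt_congr (hab : lequiv tr a b) (q : Option P) :
    (N.saturate tr).Wpt q a = (N.saturate tr).Wpt q b := by
  cases q with
  | none => classical exact if_congr (exists_congr hab) rfl rfl
  | some p => exact classWeight_congr hab

lemma saturate_preset_inter_eq_empty_of_not_enab {s : S} (ha : ∀ s, ¬ enab tr s a)
    (hb : enab tr s b) :
    (N.saturate tr).preset a ∩ (N.saturate tr).preset b = ∅ := by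
  refine Set.eq_empty_of_forall_notMem ?_
  rintro (_ | p) ⟨hpa, hpb⟩
  · exact hpb.ne' (saturate_Wpt_none_eq_zero.2 ⟨s, hb⟩)
  · exact not_exists.2 ha (exists_enab_of_classWeight_pos hpa)

lemma saturate_preset_inter_eq_empty_of_limpl (hterm : WellFounded fun s' s => tr s b s')
    (hab : limpl tr a b) (hd : ¬ ldeact tr a b) :
    (N.saturate tr).preset a ∩ (N.saturate tr).preset b = ∅ :=
  have ⟨himp, _, hb, _⟩ := hab
  saturate_preset_inter_eq_empty_of_not_enab (fun _ ha => hd (ldeact_of_enab_imp hterm himp ha)) hb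

namespace SolvesVia

lemma saturate (h : N.SolvesVia tr s₀ ζ) :
    (N.saturate tr).SolvesVia tr s₀ fun s q => q.elim 0 (ζ s) where
  injective s s' hss' := h.injective <| funext fun p => congrFun hss' (some p)
  map_initial := by simp only [PetriNet.saturate, h.map_initial]
  reachable := h.reachable
  enab_iff s t := by
    constructor
    · rintro hs (_ | p)
      · exact (saturate_Wpt_none_eq_zero.2 ⟨s, hs⟩).le
      · exact h.classWeight_le_marking hs p
    · intro hen
      have ⟨_, hlive⟩ := saturate_Wpt_none_eq_zero.1 (Nat.le_zero.1 (hen none))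
      exact (h.enab_iff s t).2 fun p =>
        (h.weight_le_classWeight (mem_liveClass_self hlive) p).trans (hen (some p))
  fire_eq {s t s'} ht := by
    funext q
    cases q with
    | none => simp [fire, PetriNet.saturate]
    | some p =>
      have henab : enab tr s t := ⟨s', ht⟩
      have hle := h.weight_le_classWeight (mem_liveClass_self henab) p
      have hle' := h.classWeight_le_marking henab p
      simp only [← h.fire_eq ht, fire, PetriNet.saturate, Option.elim_some]
      omega

lemma saturate_WPI (h : N.SolvesVia tr s₀ ζ) (hN : N.WPI)
    (hterm : ∀ t, WellFounded fun s' s => tr s t s') : (N.saturate tr).WPI := by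
  rintro a b ⟨_ | p, ha, hb⟩
  · have hdead {t} (ht : none ∈ (N.saturate tr).preset t) (s : S) : ¬ enab tr s t :=
      not_exists.1 (mt saturate_Wpt_none_eq_zero.2 ht.ne') s
    exact .inl fun q => (saturate_Wpt_congr (fun s => iff_of_false (hdead ha s) (hdead hb s)) q).le
  · have hnone : (N.saturate tr).Wpt none a = (N.saturate tr).Wpt none b :=
      (saturate_Wpt_none_eq_zero.2 (exists_enab_of_classWeight_pos ha)).trans
        (saturate_Wpt_none_eq_zero.2 (exists_enab_of_classWeight_pos hb)).symm
    exact (h.classWeight_comparable hN hterm ha hb).imp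
      (fun hle => Option.forall.2 ⟨hnone.le, hle⟩) (fun hle => Option.forall.2 ⟨hnone.ge, hle⟩)

end SolvesVia

end PetriNet

theorem selfloop_free_preset_relations_general (hN : N.WPI) (hsol : Solves N tr s₀)
    (hterm : ∀ t, WellFounded fun s' s => tr s t s') :
    ∃ N' : PetriNet (Option P) L, N'.WPI ∧ Solves N' tr s₀ ∧
      ∀ a b : L,
        (lequiv tr a b → ∀ p, N'.Wpt p a = N'.Wpt p b) ∧
        ((linter tr a b ∨ (lbowtie tr a b ∧ ¬ ldeact tr a b)) →
          N'.preset a ∩ N'.preset b = ∅) ∧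
        ((limpl tr a b ∧ ldeact tr a b) →
          (∀ p, N'.Wpt p b ≤ N'.Wpt p a) ∧ (∃ p, N'.Wpt p b ≠ N'.Wpt p a)) := by
  obtain ⟨ζ, h⟩ := hsol.exists_solvesVia
  have hWPI := h.saturate_WPI hN hterm
  refine ⟨N.saturate tr, hWPI, h.saturate.solves, fun a b => ⟨saturate_Wpt_congr, ?_, ?_⟩⟩
  · rintro (hab | ⟨hab | hba, hd⟩)
    · exact h.saturate.preset_inter_eq_empty_of_linter hWPI hab
    · exact saturate_preset_inter_eq_empty_of_limpl (hterm b) hab hd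
    · rw [Set.inter_comm]
      exact saturate_preset_inter_eq_empty_of_limpl (hterm a) hba (mt ldeact_comm.1 hd)
  · exact fun ⟨hab, hd⟩ => h.saturate.weight_lt_of_limpl_of_ldeact hWPI hab hd

end PresetRelations

/-- For a finite, reachable, deterministic LTS without self-loops
that is solvable by a WPI Petri net, there is a WPI Petri net solving it in which
(i) equivalent labels have identical presets, (ii) labels related by `∥`, or by
`⋈` without `⊲⊳`, have disjoint presets, and (iii) `a ▷ b` with `a ⊲⊳ b` yields
proper containment `W(·,b) ⪇ W(·,a)`. -/
theorem selfloop_free_preset_relations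
    {S L : Type*} [Fintype S] [Fintype L] (tr : S → L → S → Prop) (s₀ : S)
    (hdet : Deterministic tr) (hreach : ReachableLTS tr s₀)
    (hnoself : ∀ (s : S) (t : L), ¬ tr s t s)
    (hsolvable : ∃ (P : Type) (_ : Finite P) (N : PetriNet P L),
        N.WPI ∧ Solves N tr s₀) :
    ∃ (P : Type) (_ : Finite P) (N : PetriNet P L), N.WPI ∧ Solves N tr s₀ ∧
      ∀ a b : L,
        (lequiv tr a b → ∀ p, N.Wpt p a = N.Wpt p b) ∧
        ((linter tr a b ∨ (lbowtie tr a b ∧ ¬ ldeact tr a b)) →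
          N.preset a ∩ N.preset b = ∅) ∧
        ((limpl tr a b ∧ ldeact tr a b) →
          (∀ p, N.Wpt p b ≤ N.Wpt p a) ∧ (∃ p, N.Wpt p b ≠ N.Wpt p a)) := by
  obtain ⟨P, _, N, hN, hsol⟩ := hsolvable
  obtain ⟨ζ, h⟩ := hsol.exists_solvesVia
  exact ⟨Option P, inferInstance, selfloop_free_preset_relations_general hN hsol
    fun t => h.wellFounded_of_no_selfloop (hnoself · t)⟩
end
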